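/- Let X be a nonvoid simplicial complex on a finite vertex set V and let k ≥ 1. If X is k-collapsible, then X has a free face of cardinality at most k; consequently v(X) ≤ k, i.e., v(X) ≤ col(X). -/

import Mathlib

open scoped Classical

/-- `F` is a facet (inclusion-maximal face) of the complex `X`. -/
def IsFacet {V : Type*} (X : Set (Finset V)) (F : Finset V) : Prop :=
  F ∈ X ∧ ∀ G ∈ X, F ⊆ G → G = F

/-- `A` is a free face of `X`: a face contained in exactly one facet. -/
def IsFreeFace {V : Type*} (X : Set (Finset V)) (A : Finset V) : Prop :=
  A ∈ X ∧ ∃! F : Finset V, IsFacet X F ∧ A ⊆ F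

/-- `X` is `k`-collapsible: `X` can be reduced to the void complex by
repeatedly removing a free face of cardinality at most `k` (removing a free
face `σ` deletes all the faces containing `σ`). -/
inductive KCollapsible {V : Type*} (k : ℕ) : Set (Finset V) → Prop
  | void : KCollapsible k (∅ : Set (Finset V))
  | step (X : Set (Finset V)) (σ : Finset V)
      (hfree : IsFreeFace X σ) (hcard : σ.card ≤ k)
      (hrec : KCollapsible k {τ ∈ X | ¬ σ ⊆ τ}) : KCollapsible k X

/-- The neighbors of a face `A` in the clutter of circuits of `X`. -/
noncomputable def nbrs {V : Type*} [Fintype V] [DecidableEq V]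
    (X : Set (Finset V)) (A : Finset V) : Finset V :=
  Finset.univ.filter (fun w => w ∉ A ∧ insert w A ∉ X)

/-- `W` is a vertex cover: its complement is a face of `X`. -/
def IsVertexCover {V : Type*} [Fintype V] [DecidableEq V]
    (X : Set (Finset V)) (W : Finset V) : Prop :=
  Finset.univ \ W ∈ X

/-- `W` is a minimal vertex cover. -/
def IsMinVertexCover {V : Type*} [Fintype V] [DecidableEq V]
    (X : Set (Finset V)) (W : Finset V) : Prop :=
  IsVertexCover X W ∧ ∀ W' ⊂ W, ¬ IsVertexCover X W'

/-- The v-number of a simplicial complex `X`. -/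
noncomputable def vNumber {V : Type*} [Fintype V] [DecidableEq V]
    (X : Set (Finset V)) : ℕ :=
  sInf {n : ℕ | ∃ A ∈ X, IsMinVertexCover X (nbrs X A) ∧ A.card = n}

/-!
For a face `A` of a simplicial complex `X`, the complement of `nbrs X A` is the union of the faces
containing `A`, and complements of minimal vertex covers are facets. So `nbrs X A` is a minimal
vertex cover exactly when that union is itself a facet, which then is the only facet containing
`A`, so that the v-number is the least cardinality of a free face. The first step of a collapse of
a nonvoid complex removes a free face of cardinality at most `k`.
-/

section Facets

variable {V : Type*} {X : Set (Finset V)}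

theorem isFacet_iff_maximal {F : Finset V} : IsFacet X F ↔ Maximal (· ∈ X) F := by
  simp only [IsFacet, maximal_iff, eq_comm]

theorem exists_isFacet_superset [Finite V] {A : Finset V} (hA : A ∈ X) :
    ∃ F, IsFacet X F ∧ A ⊆ F := by
  obtain ⟨F, hAF, hF⟩ := X.toFinite.exists_le_maximal hA
  exact ⟨F, isFacet_iff_maximal.2 hF, hAF⟩

theorem KCollapsible.exists_isFreeFace_card_le {k : ℕ} (hcol : KCollapsible k X)
    (hne : X.Nonempty) : ∃ σ, IsFreeFace X σ ∧ σ.card ≤ k := by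
  cases hcol with
  | void => exact absurd hne Set.not_nonempty_empty
  | step _ σ hfree hcard _ => exact ⟨σ, hfree, hcard⟩

end Facets

section VertexCovers

variable {V : Type*} [Fintype V] [DecidableEq V] {X : Set (Finset V)} {A : Finset V}

theorem isMinVertexCover_iff_isFacet_compl {W : Finset V} :
    IsMinVertexCover X W ↔ IsFacet X Wᶜ := by
  simp only [isFacet_iff_maximal, maximal_iff_forall_gt, IsMinVertexCover, IsVertexCover,
    ← Finset.compl_eq_univ_sdiff]
  refine and_congr_right fun _ => Iff.symm (compl_surjective.forall.trans ?_)
  simp only [Finset.compl_ssubset_compl]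

theorem mem_compl_nbrs (hA : A ∈ X) {w : V} : w ∈ (nbrs X A)ᶜ ↔ insert w A ∈ X := by
  by_cases hw : w ∈ A
  · simp [nbrs, hw, hA]
  · simp [nbrs, hw]

theorem subset_compl_nbrs (hX : IsLowerSet X) {G : Finset V} (hG : G ∈ X) (hAG : A ⊆ G) :
    G ⊆ (nbrs X A)ᶜ := fun _ hw =>
  (mem_compl_nbrs (hX hAG hG)).2 (hX (Finset.insert_subset hw hAG) hG)

theorem isFreeFace_iff_isFacet_compl_nbrs (hX : IsLowerSet X) :
    IsFreeFace X A ↔ A ∈ X ∧ IsFacet X (nbrs X A)ᶜ := by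
  refine and_congr_right fun hA => ⟨?_, fun hN => ?_⟩
  · rintro ⟨F, ⟨hF, hAF⟩, huniq⟩
    suffices (nbrs X A)ᶜ ⊆ F by rwa [this.antisymm (subset_compl_nbrs hX hF.1 hAF)]
    intro w hw
    obtain ⟨G, hG, hwAG⟩ := exists_isFacet_superset ((mem_compl_nbrs hA).1 hw)
    obtain rfl : G = F := huniq G ⟨hG, (Finset.subset_insert w A).trans hwAG⟩
    exact hwAG (Finset.mem_insert_self w A)
  · exact ⟨(nbrs X A)ᶜ, ⟨hN, subset_compl_nbrs hX hA subset_rfl⟩,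
      fun G ⟨hG, hAG⟩ => (hG.2 _ hN.1 (subset_compl_nbrs hX hG.1 hAG)).symm⟩

theorem isFreeFace_iff_isMinVertexCover_nbrs (hX : IsLowerSet X) :
    IsFreeFace X A ↔ A ∈ X ∧ IsMinVertexCover X (nbrs X A) := by
  rw [isMinVertexCover_iff_isFacet_compl, isFreeFace_iff_isFacet_compl_nbrs hX]

theorem vNumber_eq_sInf_card_isFreeFace (hX : IsLowerSet X) :
    vNumber X = sInf {n | ∃ A, IsFreeFace X A ∧ A.card = n} := by
  simp only [vNumber, isFreeFace_iff_isMinVertexCover_nbrs hX, and_assoc]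

theorem IsFreeFace.vNumber_le_card (hX : IsLowerSet X) (hA : IsFreeFace X A) :
    vNumber X ≤ A.card := by
  rw [vNumber_eq_sInf_card_isFreeFace hX]
  exact Nat.sInf_le ⟨A, hA, rfl⟩

end VertexCovers

/-- If `X` is a nonvoid simplicial complex on a finite vertex
set `V` and `k ≥ 1` is such that `X` is `k`-collapsible, then `X` has a free
face of cardinality at most `k`, and consequently `v(X) ≤ k`
(i.e. `v(X) ≤ col(X)`). -/
theorem vNumber_le_of_kCollapsible {V : Type*} [Fintype V] [DecidableEq V]
    (X : Set (Finset V))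
    (hdown : ∀ s ∈ X, ∀ t ⊆ s, t ∈ X)
    (hvert : ∀ x : V, ({x} : Finset V) ∈ X)
    (hne : X.Nonempty) (k : ℕ) (hk : 1 ≤ k)
    (hcol : KCollapsible k X) :
    (∃ σ : Finset V, IsFreeFace X σ ∧ σ.card ≤ k) ∧ vNumber X ≤ k := by
  have hX : IsLowerSet X := fun s t hts hs => hdown s hs t hts
  obtain ⟨σ, hfree, hcard⟩ := hcol.exists_isFreeFace_card_le hne
  exact ⟨⟨σ, hfree, hcard⟩, (hfree.vNumber_le_card hX).trans hcard⟩
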